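/- arXiv:0711.1993 — 3 statements merged into one kernel-verified Lean document; each statement's English description precedes it below -/
import Mathlib

section
/- Let N = {1, …, n} and let v be a capacity on (N, 2^N). Then Marichal's entropy H_M(v) := Σ_{i=1}^n Σ_{A ⊆ N\{i}} γ^n_{|A|} h[v(A ∪ {i}) − v(A)], where γ^n_k = (n−k−1)! k! / n!, equals the average of the Shannon entropies of the increment distributions over all maximal chains: H_M(v) = (1/n!) Σ_{C ∈ 𝒞(2^N)} H_S(p^{v,C}). -/
open Finset

variable {α : Type*} [DecidableEq α] [Fintype α]

/-- `c = (c 0, …, c m)` is a maximal chain of the set system `S`: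
`∅ = c 0 ⊊ c 1 ⊊ ⋯ ⊊ c m = N`, each `c i ∈ S`, and no element of `S` lies strictly
between consecutive elements. Its length is `m`. -/
def IsMaxChainOf (S : Finset (Finset α)) (m : ℕ) (c : Fin (m + 1) → Finset α) : Prop :=
  c 0 = ∅ ∧ c (Fin.last m) = Finset.univ ∧ (∀ i, c i ∈ S) ∧
    (∀ i : Fin m, c i.castSucc ⊂ c i.succ) ∧
    (∀ i : Fin m, ∀ x ∈ S, ¬(c i.castSucc ⊂ x ∧ x ⊂ c i.succ))

/-- `(N, S)` is a regular set system: `∅, N ∈ S` and every maximal chain has length `|N|`. -/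
def IsRegularSetSystem (S : Finset (Finset α)) : Prop :=
  ∅ ∈ S ∧ Finset.univ ∈ S ∧
    ∀ (m : ℕ) (c : Fin (m + 1) → Finset α), IsMaxChainOf S m c → m = Fintype.card α

/-- A capacity on the set system `S`: a `[0,1]`-valued, monotone set function
with `v ∅ = 0` and `v N = 1`. -/
def IsCapacity (S : Finset (Finset α)) (v : Finset α → ℝ) : Prop :=
  v ∅ = 0 ∧ v Finset.univ = 1 ∧ (∀ A ∈ S, 0 ≤ v A ∧ v A ≤ 1) ∧
    ∀ A ∈ S, ∀ B ∈ S, A ⊆ B → v A ≤ v B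

/-- `h(x) = -x log₂ x` (with the convention `0 log 0 = 0`, satisfied by `Real.logb`). -/
noncomputable def hfun (x : ℝ) : ℝ := -(x * Real.logb 2 x)

/-- Shannon entropy of a probability distribution. -/
noncomputable def shannonEntropy {m : ℕ} (p : Fin m → ℝ) : ℝ := ∑ i, hfun (p i)

/-- The increment distribution `p^{v,C}` along a chain `c`. -/
def chainDist (v : Finset α → ℝ) {m : ℕ} (c : Fin (m + 1) → Finset α) : Fin m → ℝ :=
  fun i => v (c i.succ) - v (c i.castSucc)

/-- The maximal chains of `S` (of length `|N|`; in a regular set system these are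
all the maximal chains). -/
noncomputable def maxChains (S : Finset (Finset α)) :
    Finset (Fin (Fintype.card α + 1) → Finset α) :=
  @Finset.filter _ (fun c => IsMaxChainOf S (Fintype.card α) c) (Classical.decPred _)
    Finset.univ

/-- The entropy `H(v)` of a capacity `v` on a regular set system. -/
noncomputable def capEntropy (S : Finset (Finset α)) (v : Finset α → ℝ) : ℝ :=
  (1 / ((maxChains S).card : ℝ)) * ∑ c ∈ maxChains S, shannonEntropy (chainDist v c)

/-- The coefficient `γ^n_k = (n - k - 1)! k! / n!`. -/
noncomputable def gammaCoef (n k : ℕ) : ℝ :=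
  ((n - k - 1).factorial : ℝ) * (k.factorial : ℝ) / (n.factorial : ℝ)

/-!
A maximal chain of `2^N` adds the elements of `N` one at a time, so the maximal chains correspond to
the numberings of `N`. The step from `A` to `A ∪ {i}` belongs to the chain of a numbering exactly
when the numbering lists first the elements of `A`, then `i`, then the rest, which happens for
`|A|! (n - |A| - 1)! = n! γ^n_{|A|}` numberings. Hence, when any function of the steps is summed
over all steps of all maximal chains, each pair `(i, A)` with `i ∉ A` receives the weight
`n! γ^n_{|A|}`.
-/

section

open scoped Nat
open Numbering

lemma injective_of_mem_succ_of_notMem_castSucc {X : Type*} {m : ℕ} {c : Fin (m + 1) → Finset X}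
    {a : Fin m → X} (hc : Monotone c) (hmem : ∀ i, a i ∈ c i.succ)
    (hnotMem : ∀ i, a i ∉ c i.castSucc) : Function.Injective a := by
  refine .of_lt_imp_ne fun i j hij h ↦ hnotMem j ?_
  exact h ▸ hc (Fin.succ_le_castSucc_iff.2 hij) (hmem i)

variable {X : Type*} [Fintype X]

lemma card_subtype_mem_compl [DecidableEq X] (s t : Finset X) :
    #(t.subtype (· ∈ sᶜ)) = #(t \ s) := by
  simp_rw [card_subtype, mem_compl, sdiff_eq_filter]

lemma isPrefix_iff_isPrefix_prefixedEquiv_snd [DecidableEq X] {s t : Finset X} (hst : s ⊆ t)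
    (f : prefixed s) :
    IsPrefix f.1 t ↔ IsPrefix (prefixedEquiv s f).2 (t.subtype (· ∈ sᶜ)) := by
  have hf : IsPrefix f.1 s := mem_prefixed.1 f.2
  have hval (x) : ((prefixedEquiv s f).2 x : ℕ) = f.1 x - #s := rfl
  simp only [IsPrefix, Subtype.forall, mem_subtype, mem_compl, card_subtype_mem_compl,
    card_sdiff_of_subset hst, hval]
  refine forall_congr' fun x ↦ ?_
  by_cases hxs : x ∈ s
  · simpa [hxs, hst hxs] using ((hf x).1 hxs).trans_le (card_le_card hst)
  · have hge : #s ≤ f.1 x := not_lt.1 ((hf x).not.1 hxs)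
    simp [hxs, Nat.sub_lt_sub_iff_right hge]

lemma card_prefixed_inter_prefixed [DecidableEq X] {s t : Finset X} (hst : s ⊆ t) :
    #(prefixed s ∩ prefixed t) = (#s)! * (#t - #s)! * (Fintype.card X - #t)! := by
  have hle : #s ≤ #t := card_le_card hst
  calc #(prefixed s ∩ prefixed t)
    _ = #((prefixed t).subtype (· ∈ prefixed s)) := by
      rw [inter_comm, card_subtype, filter_mem_eq_inter]
    _ = #((univ : Finset (Numbering s)) ×ˢ prefixed (t.subtype (· ∈ sᶜ))) :=
      card_equiv (prefixedEquiv s) fun f ↦ by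
        simp [isPrefix_iff_isPrefix_prefixedEquiv_snd hst]
    _ = (#s)! * ((#t - #s)! * (#sᶜ - (#t - #s))!) := by
      rw [card_product, card_univ, Fintype.card_numbering, Fintype.card_coe, card_prefixed,
        card_subtype_mem_compl, card_sdiff_of_subset hst, Fintype.card_coe]
    _ = (#s)! * (#t - #s)! * (Fintype.card X - #t)! := by
      rw [card_compl, tsub_tsub_tsub_cancel_right hle, mul_assoc]

/-- The maximal chain of initial segments of a numbering `f`: its `k`-th member consists of the
elements numbered `0, …, k - 1`. -/
def numberingChain (f : Numbering X) (k : Fin (Fintype.card X + 1)) : Finset X :=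
  {x | (f x).castSucc < k}

lemma mem_numberingChain {f : Numbering X} {k : Fin (Fintype.card X + 1)} {x : X} :
    x ∈ numberingChain f k ↔ (f x).castSucc < k := by
  simp [numberingChain]

lemma numberingChain_zero (f : Numbering X) : numberingChain f 0 = ∅ := by
  simp [numberingChain]

lemma numberingChain_last (f : Numbering X) : numberingChain f (Fin.last _) = univ := by
  simp [numberingChain, Fin.castSucc_lt_last]

lemma symm_notMem_numberingChain_castSucc (f : Numbering X) (k : Fin (Fintype.card X)) :
    f.symm k ∉ numberingChain f k.castSucc := by
  simp [mem_numberingChain]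

lemma numberingChain_succ [DecidableEq X] (f : Numbering X) (k : Fin (Fintype.card X)) :
    numberingChain f k.succ = insert (f.symm k) (numberingChain f k.castSucc) := by
  ext x
  simp [mem_numberingChain, Fin.castSucc_lt_succ_iff, le_iff_eq_or_lt, Equiv.eq_symm_apply]

lemma numberingChain_injective : Function.Injective (numberingChain (X := X)) := by
  refine fun f g hfg ↦ Equiv.ext fun x ↦ Fin.castSucc_injective _ (eq_of_forall_gt_iff fun k ↦ ?_)
  rw [← mem_numberingChain, hfg, mem_numberingChain]

lemma card_numberingChain (f : Numbering X) (k : Fin (Fintype.card X + 1)) :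
    #(numberingChain f k) = k := by
  calc #(numberingChain f k)
    _ = #{j : Fin (Fintype.card X) | (j : ℕ) < k} :=
      card_equiv f (by simp [mem_numberingChain, Fin.lt_def])
    _ = k := by rw [Fin.card_filter_val_lt, min_eq_right k.is_le]

lemma isPrefix_numberingChain (f : Numbering X) (k : Fin (Fintype.card X + 1)) :
    IsPrefix f (numberingChain f k) := by
  intro x
  rw [card_numberingChain, mem_numberingChain, Fin.lt_def, Fin.val_castSucc]

lemma numberingChain_castSucc_eq_iff [DecidableEq X] {f : Numbering X} {i : X} {A : Finset X}
    (hi : i ∉ A) :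
    numberingChain f (f i).castSucc = A ↔ f ∈ prefixed A ∩ prefixed (insert i A) := by
  simp only [mem_inter, mem_prefixed]
  constructor
  · rintro rfl
    refine ⟨isPrefix_numberingChain f _, ?_⟩
    simpa [numberingChain_succ] using isPrefix_numberingChain f (f i).succ
  · rintro ⟨hA, hiA⟩
    have hfi : (f i : ℕ) = #A := by
      have hlt := (hiA i).1 (mem_insert_self i A)
      have hge := (hA i).not.1 hi
      rw [card_insert_of_notMem hi] at hlt
      lia
    ext x
    rw [hA x, ← hfi, mem_numberingChain, Fin.castSucc_lt_castSucc_iff, Fin.lt_def]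

lemma card_filter_numberingChain_castSucc_eq [DecidableEq X] {i : X} {A : Finset X} (hi : i ∉ A) :
    #{f : Numbering X | numberingChain f (f i).castSucc = A} =
      (#A)! * (Fintype.card X - #A - 1)! := by
  simp_rw [numberingChain_castSucc_eq_iff hi, filter_univ_mem]
  rw [card_prefixed_inter_prefixed (subset_insert i A), card_insert_of_notMem hi,
    Nat.add_sub_cancel_left, Nat.factorial_one, mul_one, Nat.sub_sub]

lemma isMaxChainOf_univ_iff {m : ℕ} {c : Fin (m + 1) → Finset X} :
    IsMaxChainOf univ m c ↔
      c 0 = ∅ ∧ c (Fin.last m) = univ ∧ ∀ i : Fin m, c i.castSucc ⋖ c i.succ := by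
  simp [IsMaxChainOf, CovBy, forall_and]

lemma isMaxChainOf_numberingChain (f : Numbering X) :
    IsMaxChainOf univ (Fintype.card X) (numberingChain f) := by
  classical
  refine isMaxChainOf_univ_iff.2 ⟨numberingChain_zero f, numberingChain_last f, fun k ↦ ?_⟩
  rw [numberingChain_succ]
  exact covBy_insert (symm_notMem_numberingChain_castSucc f k)

lemma exists_numberingChain_eq {c : Fin (Fintype.card X + 1) → Finset X}
    (hc : IsMaxChainOf univ (Fintype.card X) c) : ∃ f, numberingChain f = c := by
  classical
  obtain ⟨hzero, -, hcov⟩ := isMaxChainOf_univ_iff.1 hc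
  choose a hnotMem hinsert using fun i ↦ (hcov i).exists_finset_insert
  have hmono : Monotone c := Fin.monotone_iff_le_succ.2 fun i ↦ (hcov i).le
  have hmem : ∀ i, a i ∈ c i.succ := fun i ↦ hinsert i ▸ mem_insert_self _ _
  have ha : Function.Bijective a :=
    (Fintype.bijective_iff_injective_and_card a).2
      ⟨injective_of_mem_succ_of_notMem_castSucc hmono hmem hnotMem, Fintype.card_fin _⟩
  refine ⟨(Equiv.ofBijective a ha).symm, funext fun k ↦ ?_⟩
  induction k using Fin.induction with
  | zero => rw [numberingChain_zero, hzero]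
  | succ i ih => rw [numberingChain_succ, ih, ← hinsert]; rfl

lemma maxChains_univ_eq_map_numberingChain [DecidableEq X] :
    maxChains (univ : Finset (Finset X)) = univ.map ⟨numberingChain, numberingChain_injective⟩ := by
  ext c
  simp only [maxChains, mem_filter, mem_univ, true_and, mem_map, Function.Embedding.coeFn_mk]
  exact ⟨exists_numberingChain_eq, by rintro ⟨f, rfl⟩; exact isMaxChainOf_numberingChain f⟩

theorem sum_maxChains_univ_sum_castSucc_succ [DecidableEq X] {M : Type*} [AddCommMonoid M]
    (F : Finset X → Finset X → M) :
    ∑ c ∈ maxChains univ, ∑ k : Fin (Fintype.card X), F (c k.castSucc) (c k.succ) =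
      ∑ i, ∑ A ∈ (univ.erase i).powerset,
        ((#A)! * (Fintype.card X - #A - 1)!) • F A (insert i A) := by
  have hreindex (f : Numbering X) :
      ∑ k : Fin (Fintype.card X), F (numberingChain f k.castSucc) (numberingChain f k.succ) =
        ∑ i, F (numberingChain f (f i).castSucc) (insert i (numberingChain f (f i).castSucc)) := by
    simp_rw [← Equiv.sum_comp f, numberingChain_succ, Equiv.symm_apply_apply]
  simp_rw [maxChains_univ_eq_map_numberingChain, sum_map, Function.Embedding.coeFn_mk, hreindex]
  rw [sum_comm]
  refine sum_congr rfl fun i _ ↦ ?_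
  have hmaps (f : Numbering X) (_ : f ∈ univ) :
      numberingChain f (f i).castSucc ∈ (univ.erase i).powerset := by
    simp [mem_powerset, subset_erase, mem_numberingChain]
  rw [← sum_fiberwise_of_maps_to' hmaps fun A ↦ F A (insert i A)]
  refine sum_congr rfl fun A hA ↦ ?_
  have hi : i ∉ A := (subset_erase.1 (mem_powerset.1 hA)).2
  rw [sum_const, card_filter_numberingChain_castSucc_eq hi]

theorem marichalEntropy_eq_average_over_maxChains_general [DecidableEq X]
    {E : Type*} [AddCommMonoid E] [Module ℝ E] (F : Finset X → Finset X → E) :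
    ∑ i : X, ∑ A ∈ (univ.erase i).powerset,
        gammaCoef (Fintype.card X) #A • F A (insert i A) =
      (1 / (Fintype.card X)! : ℝ) •
        ∑ c ∈ maxChains univ, ∑ k : Fin (Fintype.card X), F (c k.castSucc) (c k.succ) := by
  simp_rw [sum_maxChains_univ_sum_castSucc_succ, smul_sum, ← Nat.cast_smul_eq_nsmul ℝ, smul_smul]
  refine sum_congr rfl fun i _ ↦ sum_congr rfl fun A _ ↦ ?_
  congr 1
  push_cast [gammaCoef]
  ring

end

/-- Dukhovny: Marichal's entropy of a capacity on `2^N` is the average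
over all maximal chains of the Shannon entropies of the increment distributions. -/
theorem marichalEntropy_eq_average_over_maxChains (v : Finset α → ℝ)
    (hv : IsCapacity (Finset.univ : Finset (Finset α)) v) :
    ∑ i : α, ∑ A ∈ (Finset.univ.erase i).powerset,
        gammaCoef (Fintype.card α) A.card * hfun (v (insert i A) - v A)
      = (1 / ((Fintype.card α).factorial : ℝ)) *
          ∑ c ∈ maxChains (Finset.univ : Finset (Finset α)),
            shannonEntropy (chainDist v c) :=
  marichalEntropy_eq_average_over_maxChains_general fun A B ↦ hfun (v B - v A)
end

section
/- Let (N, 𝔖) be a regular set system with |N| = n ≥ 1 and let v be a capacity on 𝔖. Then H(v) = 0 if and only if v is {0,1}-valued, i.e. v(A) ∈ {0, 1} for every A ∈ 𝔖. -/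
open Finset

variable {α : Type*} [DecidableEq α] [Fintype α]

/-!
Each summand of `H(v)` is a sum of terms `h(x)` with `x ∈ [0, 1]`, hence nonnegative, so `H(v) = 0`
forces every increment of `v` along every maximal chain to be `0` or `1`. As `v` starts from
`v ∅ = 0` and never exceeds `1`, this means that `v` is `{0, 1}`-valued along the chain. Any member
of `𝔖` lies on a maximal chain, because `∅ ⊆ A ⊆ N` can be refined until all steps are coverings.
-/

theorem hfun_nonneg {x : ℝ} (h0 : 0 ≤ x) (h1 : x ≤ 1) : 0 ≤ hfun x :=
  neg_nonneg.2 (mul_nonpos_of_nonneg_of_nonpos h0 (Real.logb_nonpos one_lt_two h0 h1))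

theorem hfun_eq_zero_iff {x : ℝ} (h0 : 0 ≤ x) : hfun x = 0 ↔ x = 0 ∨ x = 1 := by
  have hlog : Real.log x = 0 ↔ x = 0 ∨ x = 1 := by
    rw [Real.log_eq_zero]
    exact or_congr_right (or_iff_left (by linarith))
  have hlog_two : Real.log 2 ≠ 0 := (Real.log_pos one_lt_two).ne'
  simp only [hfun, Real.logb, neg_eq_zero, mul_eq_zero, div_eq_zero_iff, hlog_two,
    or_false, hlog, or_self_left]

section Entropy

variable {m : ℕ} {p : Fin m → ℝ}

theorem shannonEntropy_nonneg (hp : p ∈ Set.Icc 0 1) : 0 ≤ shannonEntropy p :=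
  sum_nonneg fun i _ => hfun_nonneg (hp.1 i) (hp.2 i)

theorem shannonEntropy_eq_zero_iff (hp : p ∈ Set.Icc 0 1) :
    shannonEntropy p = 0 ↔ ∀ i, p i = 0 ∨ p i = 1 := by
  rw [shannonEntropy, sum_eq_zero_iff_of_nonneg fun i _ => hfun_nonneg (hp.1 i) (hp.2 i)]
  simp only [mem_univ, true_imp_iff, hfun_eq_zero_iff (hp.1 _)]

end Entropy

theorem forall_sub_eq_zero_or_one_iff {R : Type*} [Ring R] [PartialOrder R] [IsOrderedRing R]
    [Nontrivial R] {m : ℕ} {f : Fin (m + 1) → R} (hf : Monotone f) (hf0 : f 0 = 0)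
    (hf1 : ∀ i, f i ≤ 1) :
    (∀ i : Fin m, f i.succ - f i.castSucc = 0 ∨ f i.succ - f i.castSucc = 1) ↔
      ∀ i, f i = 0 ∨ f i = 1 := by
  constructor
  · intro hsub i
    induction i using Fin.induction with
    | zero => exact .inl hf0
    | succ i ih =>
      rcases hsub i with hstep | hstep
      · rwa [sub_eq_zero.1 hstep]
      · have hle : f i.castSucc ≤ 0 := by
          simpa only [eq_add_of_sub_eq hstep, add_le_iff_nonpos_right] using hf1 i.succ
        have hzero : f i.castSucc = 0 := hle.antisymm (hf0 ▸ hf (Fin.zero_le _))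
        exact .inr (by rw [eq_add_of_sub_eq hstep, hzero, add_zero])
  · intro hval i
    have hle : f i.castSucc ≤ f i.succ := hf i.castSucc_le_succ
    rcases hval i.castSucc with hl | hl <;> rcases hval i.succ with hr | hr
    · simp [hl, hr]
    · simp [hl, hr]
    · exact absurd (hl ▸ hr ▸ hle) zero_lt_one.not_ge
    · simp [hl, hr]

section MaximalChains

omit [DecidableEq α]

variable {S : Finset (Finset α)} {m : ℕ} {c : Fin (m + 1) → Finset α} {v : Finset α → ℝ}

theorem IsMaxChainOf.monotone (hc : IsMaxChainOf S m c) : Monotone c :=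
  Fin.monotone_iff_le_succ.2 fun i => (hc.2.2.2.1 i).subset

theorem exists_isMaxChainOf_apply_eq (hempty : ∅ ∈ S) (huniv : univ ∈ S) {A : Finset α}
    (hA : A ∈ S) : ∃ (m : ℕ) (c : Fin (m + 1) → Finset α), IsMaxChainOf S m c ∧ ∃ i, c i = A := by
  let : BoundedOrder S :=
    { bot := ⟨∅, hempty⟩
      bot_le := fun B => empty_subset B.1
      top := ⟨univ, huniv⟩
      le_top := fun B => subset_univ B.1 }
  obtain ⟨t, i, hti, hbot, htop⟩ :=
    LTSeries.exists_relSeries_covBy_and_head_eq_bot_and_last_eq_bot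
      (RelSeries.singleton _ (⟨A, hA⟩ : S))
  refine ⟨t.length, fun j => t j, ⟨?_, ?_, fun j => (t j).2, fun j => (t.step j).lt,
    fun j B hB hlt => (t.step j).2 (c := ⟨B, hB⟩) hlt.1 hlt.2⟩, i 0, ?_⟩
  · exact congrArg Subtype.val hbot
  · exact congrArg Subtype.val htop
  · exact congrArg Subtype.val (congrFun hti 0)

theorem mem_maxChains {c : Fin (Fintype.card α + 1) → Finset α} :
    c ∈ maxChains S ↔ IsMaxChainOf S (Fintype.card α) c := by
  simp only [maxChains, mem_filter_univ]

theorem IsRegularSetSystem.exists_mem_maxChains_apply_eq (hS : IsRegularSetSystem S)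
    {A : Finset α} (hA : A ∈ S) : ∃ c ∈ maxChains S, ∃ i, c i = A := by
  obtain ⟨hempty, huniv, hlength⟩ := hS
  obtain ⟨m, c, hc, hcA⟩ := exists_isMaxChainOf_apply_eq hempty huniv hA
  obtain rfl := hlength m c hc
  exact ⟨c, mem_maxChains.2 hc, hcA⟩

theorem IsCapacity.monotone_comp {ι : Type*} [Preorder ι] {c : ι → Finset α}
    (hv : IsCapacity S v) (hc : Monotone c) (hcS : ∀ i, c i ∈ S) : Monotone (v ∘ c) := by
  obtain ⟨-, -, -, hmono⟩ := hv
  exact fun i j hij => hmono _ (hcS i) _ (hcS j) (hc hij)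

theorem IsCapacity.chainDist_mem_Icc (hv : IsCapacity S v) (hc : Monotone c)
    (hcS : ∀ i, c i ∈ S) : chainDist v c ∈ Set.Icc 0 1 := by
  obtain ⟨-, -, hbound, -⟩ := id hv
  exact ⟨fun i => sub_nonneg.2 (hv.monotone_comp hc hcS i.castSucc_le_succ),
    fun i => (sub_le_self _ (hbound _ (hcS i.castSucc)).1).trans (hbound _ (hcS i.succ)).2⟩

theorem IsCapacity.shannonEntropy_chainDist_eq_zero_iff (hv : IsCapacity S v) (hc : Monotone c)
    (hc0 : c 0 = ∅) (hcS : ∀ i, c i ∈ S) :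
    shannonEntropy (chainDist v c) = 0 ↔ ∀ i, v (c i) = 0 ∨ v (c i) = 1 := by
  obtain ⟨hvempty, -, hbound, -⟩ := id hv
  have hstart : v (c 0) = 0 := by rw [hc0, hvempty]
  rw [shannonEntropy_eq_zero_iff (hv.chainDist_mem_Icc hc hcS)]
  exact forall_sub_eq_zero_or_one_iff (hv.monotone_comp hc hcS) hstart
    fun i => (hbound _ (hcS i)).2

theorem IsCapacity.capEntropy_eq_zero_iff_forall_shannonEntropy (hv : IsCapacity S v) :
    capEntropy S v = 0 ↔ ∀ c ∈ maxChains S, shannonEntropy (chainDist v c) = 0 := by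
  have hnonneg : ∀ c ∈ maxChains S, 0 ≤ shannonEntropy (chainDist v c) := by
    intro c hc
    have hchain : IsMaxChainOf S _ c := mem_maxChains.1 hc
    obtain ⟨-, -, hcS, -, -⟩ := id hchain
    exact shannonEntropy_nonneg (hv.chainDist_mem_Icc hchain.monotone hcS)
  rw [← sum_eq_zero_iff_of_nonneg hnonneg, capEntropy, mul_eq_zero, or_iff_right_of_imp]
  intro hcard
  have hempty : maxChains S = ∅ := by simpa using hcard
  rw [hempty, sum_empty]

end MaximalChains

/-- the entropy of a capacity on a regular set system vanishes iff
the capacity is `{0,1}`-valued. -/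
theorem capEntropy_eq_zero_iff (S : Finset (Finset α)) (hS : IsRegularSetSystem S)
    (hn : 1 ≤ Fintype.card α) (v : Finset α → ℝ) (hv : IsCapacity S v) :
    capEntropy S v = 0 ↔ ∀ A ∈ S, v A = 0 ∨ v A = 1 := by
  have hchain : ∀ c ∈ maxChains S,
      (shannonEntropy (chainDist v c) = 0 ↔ ∀ i, v (c i) = 0 ∨ v (c i) = 1) := by
    intro c hc
    have hmax : IsMaxChainOf S _ c := mem_maxChains.1 hc
    obtain ⟨hc0, -, hcS, -, -⟩ := id hmax
    exact hv.shannonEntropy_chainDist_eq_zero_iff hmax.monotone hc0 hcS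
  rw [hv.capEntropy_eq_zero_iff_forall_shannonEntropy, forall₂_congr hchain]
  constructor
  · intro hval A hA
    obtain ⟨c, hc, i, rfl⟩ := hS.exists_mem_maxChains_apply_eq hA
    exact hval c hc i
  · intro hval c hc i
    obtain ⟨-, -, hcS, -, -⟩ := mem_maxChains.1 hc
    exact hval (c i) (hcS i)
end

section
/- Let (N, 𝔖) be a regular set system. Then 𝔖 satisfies the Jordan–Dedekind chain condition: for any A, B ∈ 𝔖 with A ⊆ B, all maximal chains of the segment [A, B] = {X ∈ 𝔖 : A ⊆ X ⊆ B} (ordered by inclusion) have the same length. -/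
/-!
Glue a maximal chain of `[X, A]` below and one of `[B, Y]` above a maximal chain of `[A, B]`: the
result is a maximal chain of `[X, Y]`. The two glued pieces can be kept fixed, so if all maximal
chains of `[X, Y]` have the same length, then so do those of `[A, B]`. A regular set system is the
case `X = ∅`, `Y = N`.
-/

open Finset

variable {α : Type*} [DecidableEq α] [Fintype α]

/-- `d = (d 0, …, d k)` is a maximal chain of the segment `[A, B]` of the set
system `S`: `A = d 0 ⊊ ⋯ ⊊ d k = B`, each `d j ∈ S`, and no element of `S` lies
strictly between consecutive elements. Its length is `k`. -/
def IsSegmentMaxChain (S : Finset (Finset α)) (A B : Finset α) (k : ℕ)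
    (d : Fin (k + 1) → Finset α) : Prop :=
  d 0 = A ∧ d (Fin.last k) = B ∧ (∀ j, d j ∈ S) ∧
    (∀ j : Fin k, d j.castSucc ⊂ d j.succ) ∧
    (∀ j : Fin k, ∀ x ∈ S, ¬(d j.castSucc ⊂ x ∧ x ⊂ d j.succ))

/-- Finite saturated chains of an order, i.e. series in which each term covers the preceding one.
They model the maximal chains between two given elements, and are encoded as `RelSeries` so that
chains can be glued by `RelSeries.smash`. -/
abbrev SaturatedChain (P : Type*) [LT P] := RelSeries {(a, b) : P × P | a ⋖ b}

namespace SaturatedChain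

variable {P : Type*} [PartialOrder P] [WellFoundedLT P] [WellFoundedGT P] {a b x y : P}

lemma exists_head_eq_last_eq (hab : a ≤ b) : ∃ p : SaturatedChain P, p.head = a ∧ p.last = b := by
  obtain ⟨c, head_eq, n, last_eq, covBy⟩ :=
    exists_covBy_seq_of_wellFoundedLT_wellFoundedGT_of_le hab
  exact ⟨⟨n, fun i ↦ c i, fun i ↦ covBy i i.isLt⟩, head_eq, last_eq⟩

lemma length_eq_of_head_eq_of_last_eq (hxa : x ≤ a) (hby : b ≤ y)
    (hlen : ∀ p q : SaturatedChain P, p.head = x → p.last = y → q.head = x → q.last = y →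
      p.length = q.length)
    {p q : SaturatedChain P} (hpa : p.head = a) (hpb : p.last = b) (hqa : q.head = a)
    (hqb : q.last = b) : p.length = q.length := by
  obtain ⟨lower, lower_head, lower_last⟩ := exists_head_eq_last_eq hxa
  obtain ⟨upper, upper_head, upper_last⟩ := exists_head_eq_last_eq hby
  have extend (r : SaturatedChain P) (hra : r.head = a) (hrb : r.last = b) :
      ∃ e : SaturatedChain P, e.head = x ∧ e.last = y ∧
        e.length = lower.length + r.length + upper.length :=
    ⟨(lower.smash r (lower_last.trans hra.symm)).smash upper (by simp [hrb, upper_head]),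
      by simp [lower_head], by simp [upper_last], rfl⟩
  obtain ⟨p', hp'x, hp'y, hp'⟩ := extend p hpa hpb
  obtain ⟨q', hq'x, hq'y, hq'⟩ := extend q hqa hqb
  have := hlen p' q' hp'x hp'y hq'x hq'y
  omega

end SaturatedChain

lemma subtype_covBy_iff {P : Type*} [LT P] {s : P → Prop} {x y : Subtype s} :
    x ⋖ y ↔ x.1 < y.1 ∧ ∀ z, s z → ¬(x.1 < z ∧ z < y.1) := by
  simp [CovBy, ← Subtype.coe_lt_coe]

section SetSystem

variable {β : Type*} {S : Finset (Finset β)} {A B : Finset β}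

lemma SaturatedChain.isSegmentMaxChain (p : SaturatedChain S) :
    IsSegmentMaxChain S p.head p.last p.length (fun j ↦ p j) :=
  ⟨rfl, rfl, fun j ↦ (p j).2, fun j ↦ (subtype_covBy_iff.1 (p.step j)).1,
    fun j ↦ (subtype_covBy_iff.1 (p.step j)).2⟩

lemma IsSegmentMaxChain.exists_saturatedChain {k : ℕ} {d : Fin (k + 1) → Finset β}
    (h : IsSegmentMaxChain S A B k d) :
    ∃ p : SaturatedChain S, p.head.1 = A ∧ p.last.1 = B ∧ p.length = k :=
  have ⟨head_eq, last_eq, mem, ssubset, not_between⟩ := h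
  ⟨⟨k, fun j ↦ ⟨d j, mem j⟩, fun j ↦ subtype_covBy_iff.2 ⟨ssubset j, not_between j⟩⟩,
    head_eq, last_eq, rfl⟩

theorem regularSetSystem_jordanDedekind_general {X Y : Finset β} (hX : X ∈ S) (hY : Y ∈ S)
    (hXA : X ⊆ A) (hBY : B ⊆ Y)
    (hlen : ∀ (m n : ℕ) (c : Fin (m + 1) → Finset β) (e : Fin (n + 1) → Finset β),
      IsSegmentMaxChain S X Y m c → IsSegmentMaxChain S X Y n e → m = n)
    {k₁ k₂ : ℕ} {d₁ : Fin (k₁ + 1) → Finset β} {d₂ : Fin (k₂ + 1) → Finset β}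
    (h₁ : IsSegmentMaxChain S A B k₁ d₁) (h₂ : IsSegmentMaxChain S A B k₂ d₂) : k₁ = k₂ := by
  obtain ⟨p, hpA, hpB, rfl⟩ := h₁.exists_saturatedChain
  obtain ⟨q, rfl, rfl, rfl⟩ := h₂.exists_saturatedChain
  refine SaturatedChain.length_eq_of_head_eq_of_last_eq (x := ⟨X, hX⟩) (y := ⟨Y, hY⟩) hXA hBY
    (fun r s hrX hrY hsX hsY ↦ ?_) (Subtype.ext hpA) (Subtype.ext hpB) rfl rfl
  have hr := r.isSegmentMaxChain
  have hs := s.isSegmentMaxChain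
  rw [hrX, hrY] at hr
  rw [hsX, hsY] at hs
  exact hlen _ _ _ _ hr hs

lemma isSegmentMaxChain_empty_univ_iff [Fintype β] {m : ℕ} {c : Fin (m + 1) → Finset β} :
    IsSegmentMaxChain S ∅ univ m c ↔ IsMaxChainOf S m c :=
  Iff.rfl

end SetSystem

/-- a regular set system satisfies the Jordan–Dedekind chain
condition: all maximal chains of any segment `[A, B]` have the same length. -/
theorem regularSetSystem_jordanDedekind (S : Finset (Finset α))
    (hS : IsRegularSetSystem S) (A B : Finset α) (hA : A ∈ S) (hB : B ∈ S)
    (hAB : A ⊆ B) (k₁ k₂ : ℕ) (d₁ : Fin (k₁ + 1) → Finset α)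
    (d₂ : Fin (k₂ + 1) → Finset α) (h₁ : IsSegmentMaxChain S A B k₁ d₁)
    (h₂ : IsSegmentMaxChain S A B k₂ d₂) : k₁ = k₂ :=
  regularSetSystem_jordanDedekind_general hS.1 hS.2.1 A.empty_subset B.subset_univ
    (fun m n c e hc he ↦ (hS.2.2 m c (isSegmentMaxChain_empty_univ_iff.1 hc)).trans
      (hS.2.2 n e (isSegmentMaxChain_empty_univ_iff.1 he)).symm) h₁ h₂
end
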